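/- In G = SL(3, F₂), the stabilizer H of a nonzero vector in F₂³ (under the natural action) and the stabilizer K of a 2-dimensional subspace of F₂³ are almost conjugate but not conjugate subgroups of G. -/

import Mathlib

def AlmostConjugate {G : Type*} [Group G] (H K : Subgroup G) : Prop :=
  ∃ f : H ≃ K, ∀ h : H, IsConj (h : G) ((f h : K) : G)

/-!
A point stabilizer in a transitive action of a finite group meets the conjugacy class of `g` in a
number of elements that depends only on the number of fixed points of `g`, so transitive actions
with equal fixed-point counts have almost conjugate point stabilizers (Gassmann). For `SL` acting
on points and on hyperplanes, hyperplanes are points of the contragredient action, in which `g`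
acts as the inverse of `gᵀ`; and `g` and `gᵀ` have eigenspaces of the same dimensions, hence as
many fixed points. The two stabilizers are not conjugate in dimension at least three because a
hyperplane stabilizer, containing all transvections along the vectors of the hyperplane, fixes no
point. Over `F₂` a line has a single nonzero vector, so vector and line stabilizers coincide.
-/

open MulAction Module
open scoped LinearAlgebra.Projectivization Matrix

section GassmannCriterion

variable {G G' X Y : Type*} [Group G] [Group G'] [MulAction G X] [MulAction G' Y]

theorem isConj_conj_left_iff {k a g : G} : IsConj (k * a * k⁻¹) g ↔ IsConj a g :=
  have conj_a : IsConj a (k * a * k⁻¹) := isConj_iff.2 ⟨k, rfl⟩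
  ⟨conj_a.trans, conj_a.symm.trans⟩

theorem isConj_map_mulEquiv_iff (τ : G ≃* G') {a g : G} : IsConj (τ a) (τ g) ↔ IsConj a g :=
  ⟨fun h ↦ by simpa using! τ.symm.toMonoidHom.map_isConj h, τ.toMonoidHom.map_isConj⟩

theorem AlmostConjugate.of_card_isConj_eq [Finite G] {H K : Subgroup G}
    (h : ∀ g : G, Nat.card {a : H // IsConj (a : G) g} = Nat.card {b : K // IsConj (b : G) g}) :
    AlmostConjugate H K := by
  have fiber_equiv (c : ConjClasses G) : Nonempty
      ({a : H // ConjClasses.mk (a : G) = c} ≃ {b : K // ConjClasses.mk (b : G) = c}) := by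
    obtain ⟨g, rfl⟩ := ConjClasses.mk_surjective c
    simpa only [ConjClasses.mk_eq_mk_iff_isConj] using Finite.card_eq.1 (h g)
  exact ⟨Equiv.ofFiberEquiv fun c ↦ (fiber_equiv c).some, fun a ↦
    ConjClasses.mk_eq_mk_iff_isConj.1
      (Equiv.ofFiberEquiv_map (fun c ↦ (fiber_equiv c).some) a).symm⟩

theorem card_fixedBy_eq_of_isConj {a g : G} (h : IsConj a g) :
    Nat.card (fixedBy X a) = Nat.card (fixedBy X g) := by
  obtain ⟨k, rfl⟩ := isConj_iff.1 h
  rw [← smul_fixedBy, Nat.card_coe_set_eq, Nat.card_coe_set_eq, Set.ncard_smul_set]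

theorem card_stabilizer_isConj_eq [IsPretransitive G X] (g : G) (x y : X) :
    Nat.card {a : stabilizer G x // IsConj (a : G) g} =
      Nat.card {a : stabilizer G y // IsConj (a : G) g} := by
  obtain ⟨k, hk⟩ := exists_smul_eq G x y
  refine Nat.card_congr ((stabilizerEquivStabilizer hk.symm).toEquiv.subtypeEquiv fun a ↦ ?_)
  change IsConj (a : G) g ↔ IsConj (stabilizerEquivStabilizer hk.symm a : G) g
  rw [stabilizerEquivStabilizer_apply, MulAut.conj_apply, isConj_conj_left_iff]

/-- The two ways of listing the pairs `(a, x)` with `a` conjugate to `g` and `a • x = x`: point by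
point, and group element by group element. -/
def sigmaStabilizerIsConjEquiv (X : Type*) [MulAction G X] (g : G) :
    (Σ x : X, {a : stabilizer G x // IsConj (a : G) g}) ≃
      Σ a : {a : G // IsConj a g}, fixedBy X (a : G) where
  toFun p := ⟨⟨p.2.1, p.2.2⟩, p.1, p.2.1.2⟩
  invFun p := ⟨p.2.1, ⟨p.1.1, p.2.2⟩, p.1.2⟩

theorem card_stabilizer_isConj_mul_card [Finite G] [IsPretransitive G X] (g : G) (x : X) :
    Nat.card {a : stabilizer G x // IsConj (a : G) g} * Nat.card X =
      Nat.card {a : G // IsConj a g} * Nat.card (fixedBy X g) := by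
  have : Finite X := Finite.of_surjective (· • x) (surjective_smul G x)
  have := Fintype.ofFinite X
  have := Fintype.ofFinite {a : G // IsConj a g}
  calc
    _ = ∑ y : X, Nat.card {a : stabilizer G y // IsConj (a : G) g} := by
      rw [Finset.sum_congr rfl fun y _ ↦ card_stabilizer_isConj_eq g y x, Finset.sum_const,
        Finset.card_univ, smul_eq_mul, Nat.card_eq_fintype_card (α := X), mul_comm]
    _ = ∑ a : {a : G // IsConj a g}, Nat.card (fixedBy X (a : G)) := by
      rw [← Nat.card_sigma, ← Nat.card_sigma, Nat.card_congr (sigmaStabilizerIsConjEquiv X g)]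
    _ = _ := by
      rw [Finset.sum_congr rfl fun a _ ↦ card_fixedBy_eq_of_isConj a.2, Finset.sum_const,
        Finset.card_univ, smul_eq_mul, Nat.card_eq_fintype_card (α := {a : G // IsConj a g})]

theorem card_comap_isConj_eq (τ : G ≃* G') (K : Subgroup G') (g : G) :
    Nat.card {a : K.comap τ.toMonoidHom // IsConj (a : G) g} =
      Nat.card {b : K // IsConj (b : G') (τ g)} :=
  Nat.card_congr <| (τ.toEquiv.subtypeEquiv fun _ ↦ Iff.rfl).subtypeEquiv fun _ ↦
    (isConj_map_mulEquiv_iff τ).symm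

theorem AlmostConjugate.stabilizer_comap_stabilizer [Finite G] [IsPretransitive G X]
    [IsPretransitive G' Y] (τ : G ≃* G')
    (hτ : ∀ g : G, Nat.card (fixedBy X g) = Nat.card (fixedBy Y (τ g))) (x : X) (y : Y) :
    AlmostConjugate (stabilizer G x) ((stabilizer G' y).comap τ.toMonoidHom) := by
  have : Finite G' := .of_equiv G τ.toEquiv
  have : Finite X := .of_surjective (· • x) (surjective_smul G x)
  have : Nonempty X := ⟨x⟩
  have card_X : Nat.card X = Nat.card Y := by simpa using hτ 1
  refine .of_card_isConj_eq fun g ↦ Nat.eq_of_mul_eq_mul_right (Nat.card_pos (α := X)) ?_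
  calc
    _ = Nat.card {a : G // IsConj a g} * Nat.card (fixedBy X g) :=
      card_stabilizer_isConj_mul_card g x
    _ = Nat.card {b : G' // IsConj b (τ g)} * Nat.card (fixedBy Y (τ g)) := by
      rw [hτ, Nat.card_congr (τ.toEquiv.subtypeEquiv (q := (IsConj · (τ g))) fun _ ↦
        (isConj_map_mulEquiv_iff τ).symm)]
    _ = _ := by rw [card_comap_isConj_eq, card_X, card_stabilizer_isConj_mul_card]

end GassmannCriterion

section FixedPointsOfProjectivization

variable {G K V : Type*} [Field K] [AddCommGroup V] [Module K V] [Group G]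
  [DistribMulAction G V] [SMulCommClass G K V]

theorem projectivization_mk_mem_fixedBy_iff (g : G) {v : V} (hv : v ≠ 0) :
    Projectivization.mk K v hv ∈ fixedBy (ℙ K V) g ↔ ∃ c : K, c • v = g • v := by
  rw [mem_fixedBy, Projectivization.smul_mk, Projectivization.mk_eq_mk_iff']

/-- The point of `ℙ K V` fixed by `g` that is spanned by an eigenvector of `g`. -/
def eigenPoint (g : G)
    (p : Σ c : K, ℙ K (End.eigenspace (DistribMulAction.toModuleEnd K V g) c)) :
    fixedBy (ℙ K V) g :=
  ⟨p.2.map (Submodule.subtype _) (Submodule.injective_subtype _), by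
    obtain ⟨c, P⟩ := p
    induction P using Projectivization.ind with | _ v hv =>
    exact (projectivization_mk_mem_fixedBy_iff g (by simpa using hv)).2
      ⟨c, (End.mem_eigenspace_iff.1 v.2).symm⟩⟩

theorem eigenPoint_bijective (g : G) : Function.Bijective (eigenPoint (K := K) (V := V) g) := by
  constructor
  · rintro ⟨c, P⟩ ⟨d, Q⟩ hPQ
    rw [eigenPoint, eigenPoint, Subtype.mk.injEq] at hPQ
    obtain rfl : c = d := by
      induction P using Projectivization.ind with | _ v hv =>
      induction Q using Projectivization.ind with | _ w hw =>
      obtain ⟨a, ha⟩ : ∃ a : K, a • (w : V) = v := (Projectivization.mk_eq_mk_iff' ..).1 hPQ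
      have hvd : (v : V) ∈ End.eigenspace _ d := ha ▸ Submodule.smul_mem _ a w.2
      have smul_eq : c • (v : V) = d • (v : V) :=
        (End.mem_eigenspace_iff.1 v.2).symm.trans (End.mem_eigenspace_iff.1 hvd)
      exact smul_left_injective K (by simpa using hv) smul_eq
    exact congrArg (Sigma.mk c)
      (Projectivization.map_injective _ (Submodule.injective_subtype _) hPQ)
  · rintro ⟨P, hP⟩
    induction P using Projectivization.ind with | _ v hv =>
    obtain ⟨c, hc⟩ := (projectivization_mk_mem_fixedBy_iff g hv).1 hP
    exact ⟨⟨c, .mk K ⟨v, End.mem_eigenspace_iff.2 hc.symm⟩ (by simpa using hv)⟩, rfl⟩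

theorem card_fixedBy_projectivization [Fintype K] [Finite V] (g : G) :
    Nat.card (fixedBy (ℙ K V) g) =
      ∑ c : K, Nat.card (ℙ K (End.eigenspace (DistribMulAction.toModuleEnd K V g) c)) := by
  rw [← Nat.card_sigma, Nat.card_congr (Equiv.ofBijective _ (eigenPoint_bijective g))]

theorem projectivization_submodule_smul (g : G) (P : ℙ K V) :
    (g • P).submodule = P.submodule.map (DistribMulAction.toModuleEnd K V g) := by
  induction P using Projectivization.ind with | _ v hv =>
  simp [LinearMap.map_span]

theorem mem_stabilizer_mk''_iff (g : G) {L : Submodule K V} (hL : finrank K L = 1) :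
    g ∈ stabilizer G (Projectivization.mk'' L hL) ↔
      L.map (DistribMulAction.toModuleEnd K V g) = L := by
  rw [mem_stabilizer_iff, ← Projectivization.submodule_injective.eq_iff,
    projectivization_submodule_smul, Projectivization.submodule_mk'']

end FixedPointsOfProjectivization

section VectorSpace

variable {F V : Type*} [Field F] [AddCommGroup V] [Module F V]

theorem map_span_singleton_eq_iff_of_subsingleton_units [Subsingleton Fˣ] (f : V →ₗ[F] V) (v : V) :
    (F ∙ v).map f = F ∙ v ↔ f v = v := by
  rw [LinearMap.map_span, Set.image_singleton, Submodule.span_singleton_eq_span_singleton]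
  simp [Subsingleton.elim _ (1 : Fˣ)]

theorem exists_dual_apply_ne_zero_and_mem_ker [FiniteDimensional F V] {W : Submodule F V}
    (hW : 2 ≤ finrank F W) {u : V} (hu : u ≠ 0) :
    ∃ f : Dual F V, f u ≠ 0 ∧ ∃ x ∈ W, x ≠ 0 ∧ f x = 0 := by
  obtain ⟨f, hfu⟩ := Projective.exists_dual_ne_zero F hu
  have hf : f ≠ 0 := fun hf ↦ hfu (by rw [hf, LinearMap.zero_apply])
  have inf_ne_bot : W ⊓ LinearMap.ker f ≠ ⊥ := by
    rw [ne_eq, ← Submodule.finrank_eq_zero (R := F)]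
    have := Submodule.finrank_sup_add_finrank_inf_eq W (LinearMap.ker f)
    have := Dual.finrank_ker_add_one_of_ne_zero hf
    have := (W ⊔ LinearMap.ker f).finrank_le
    lia
  obtain ⟨x, ⟨hxW, hfx⟩, hx⟩ := Submodule.exists_mem_ne_zero_of_ne_bot inf_ne_bot
  exact ⟨f, hfu, x, hxW, hx, hfx⟩

end VectorSpace

section Hyperplanes

variable {ι F : Type*} [Fintype ι] [DecidableEq ι] [Field F]

theorem exists_ker_dotProductEquiv_eq {W : Submodule F (ι → F)}
    (hW : finrank F W + 1 = Fintype.card ι) :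
    ∃ w ≠ 0, LinearMap.ker (dotProductEquiv F ι w) = W := by
  have hW_top : W < ⊤ := Submodule.lt_top_of_finrank_lt_finrank (by
    rw [finrank_fintype_fun_eq_card]; lia)
  obtain ⟨f, hf, hWf⟩ := W.exists_le_ker_of_lt_top hW_top
  obtain ⟨w, rfl⟩ := (dotProductEquiv F ι).surjective f
  have finrank_ker := Dual.finrank_ker_add_one_of_ne_zero hf
  rw [finrank_fintype_fun_eq_card] at finrank_ker
  exact ⟨w, by simpa using hf, (Submodule.eq_of_le_of_finrank_eq hWf (by lia)).symm⟩

theorem ker_dotProductEquiv_eq_iff {v w : ι → F} (hv : v ≠ 0) (hw : w ≠ 0) :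
    LinearMap.ker (dotProductEquiv F ι v) = LinearMap.ker (dotProductEquiv F ι w) ↔
      Projectivization.mk F v hv = Projectivization.mk F w hw := by
  rw [Projectivization.mk_eq_mk_iff']
  constructor
  · intro hker
    have hmem := mem_span_of_iInf_ker_le_ker (ι := Unit) (L := fun _ ↦ dotProductEquiv F ι w)
      (K := dotProductEquiv F ι v) (by simp [hker])
    rw [Set.range_const, Submodule.mem_span_singleton] at hmem
    obtain ⟨c, hc⟩ := hmem
    exact ⟨c, (dotProductEquiv F ι).injective (by rw [map_smul, hc])⟩
  · rintro ⟨c, rfl⟩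
    rw [map_smul, LinearMap.ker_smul _ _ (left_ne_zero_of_smul hv)]

end Hyperplanes

section SpecialLinearGroup

variable {ι R : Type*} [Fintype ι] [DecidableEq ι] [CommRing R]

theorem specialLinearGroup_smul_eq_mulVec (g : Matrix.SpecialLinearGroup ι R) (x : ι → R) :
    g • x = (g : Matrix ι ι R) *ᵥ x := rfl

theorem toModuleEnd_specialLinearGroup (g : Matrix.SpecialLinearGroup ι R) :
    DistribMulAction.toModuleEnd R (ι → R) g = (g : Matrix ι ι R).mulVecLin := rfl

theorem transpose_inv_transpose_inv (g : Matrix.SpecialLinearGroup ι R) :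
    (g.transpose⁻¹).transpose⁻¹ = g := by
  rw [inv_eq_iff_eq_inv]
  ext
  simp [← Matrix.adjugate_transpose]

/-- The automorphism `g ↦ (gᵀ)⁻¹`, which describes the action of `SL` on the dual space in the
coordinates given by the dot product. -/
def contragredient : Matrix.SpecialLinearGroup ι R ≃* Matrix.SpecialLinearGroup ι R where
  toFun g := g.transpose⁻¹
  invFun g := g.transpose⁻¹
  left_inv := transpose_inv_transpose_inv
  right_inv := transpose_inv_transpose_inv
  map_mul' g h := by
    rw [← mul_inv_rev]
    congr 1
    ext
    simp [Matrix.mul_apply, mul_comm]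

theorem contragredient_apply (g : Matrix.SpecialLinearGroup ι R) :
    contragredient g = g.transpose⁻¹ := rfl

theorem map_ker_dotProductEquiv (g : Matrix.SpecialLinearGroup ι R) (w : ι → R) :
    (LinearMap.ker (dotProductEquiv R ι w)).map (g : Matrix ι ι R).mulVecLin =
      LinearMap.ker (dotProductEquiv R ι (contragredient g • w)) := by
  have dotProduct_smul_smul (x : ι → R) : (contragredient g • w) ⬝ᵥ (g • x) = w ⬝ᵥ x := by
    rw [specialLinearGroup_smul_eq_mulVec g, Matrix.dotProduct_mulVec, ← Matrix.mulVec_transpose,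
      ← Matrix.SpecialLinearGroup.coe_transpose, ← specialLinearGroup_smul_eq_mulVec,
      contragredient_apply, smul_inv_smul]
  ext x
  constructor
  · rintro ⟨y, hy, rfl⟩
    exact (dotProduct_smul_smul y).trans hy
  · intro hx
    refine ⟨g⁻¹ • x, ?_, smul_inv_smul g x⟩
    exact (dotProduct_smul_smul _).symm.trans (by rwa [smul_inv_smul])

theorem exists_specialLinearGroup_smul_eq_add_smul {f : Dual R (ι → R)} {x : ι → R}
    (hfx : f x = 0) : ∃ g : Matrix.SpecialLinearGroup ι R, ∀ y, g • y = y + f y • x := by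
  obtain ⟨g, hg⟩ := Matrix.SpecialLinearGroup.toLin'_equiv.surjective
    (⟨LinearEquiv.transvection hfx, LinearEquiv.transvection.det_eq_one hfx⟩ :
      SpecialLinearGroup R (ι → R))
  exact ⟨g, fun y ↦ congrArg (fun e : SpecialLinearGroup R (ι → R) ↦ e • y) hg⟩

end SpecialLinearGroup

section LineAndHyperplaneStabilizers

variable {ι F : Type*} [Fintype ι] [Field F]

theorem finrank_eigenspace_mulVecLin_transpose (A : Matrix ι ι F) (c : F) :
    finrank F (End.eigenspace Aᵀ.mulVecLin c) = finrank F (End.eigenspace A.mulVecLin c) := by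
  classical
  have eigenspace_eq_ker (B : Matrix ι ι F) :
      End.eigenspace B.mulVecLin c = LinearMap.ker (B - Matrix.scalar ι c).mulVecLin := by
    ext x
    simp [sub_eq_zero]
  have rank_eq : (Aᵀ - Matrix.scalar ι c).rank = (A - Matrix.scalar ι c).rank := by
    rw [← Matrix.rank_transpose]
    simp
  have rank_nullity (B : Matrix ι ι F) := LinearMap.finrank_range_add_finrank_ker B.mulVecLin
  have := rank_nullity (Aᵀ - Matrix.scalar ι c)
  have := rank_nullity (A - Matrix.scalar ι c)
  simp only [Matrix.rank] at rank_eq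
  rw [eigenspace_eq_ker, eigenspace_eq_ker]
  lia

variable [DecidableEq ι]

theorem card_fixedBy_contragredient [Finite F] (g : Matrix.SpecialLinearGroup ι F) :
    Nat.card (fixedBy (ℙ F (ι → F)) (contragredient g)) = Nat.card (fixedBy (ℙ F (ι → F)) g) := by
  have := Fintype.ofFinite F
  rw [contragredient_apply, fixedBy_inv, card_fixedBy_projectivization,
    card_fixedBy_projectivization]
  refine Finset.sum_congr rfl fun c _ ↦ ?_
  rw [toModuleEnd_specialLinearGroup, toModuleEnd_specialLinearGroup,
    Matrix.SpecialLinearGroup.coe_transpose,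
    Projectivization.card_of_finrank F _ (finrank_eigenspace_mulVecLin_transpose _ c),
    Projectivization.card_of_finrank F _ rfl]

theorem mem_comap_contragredient_stabilizer_mk_iff (g : Matrix.SpecialLinearGroup ι F)
    {w : ι → F} (hw : w ≠ 0) :
    g ∈ (stabilizer _ (Projectivization.mk F w hw)).comap contragredient.toMonoidHom ↔
      (LinearMap.ker (dotProductEquiv F ι w)).map (g : Matrix ι ι F).mulVecLin =
        LinearMap.ker (dotProductEquiv F ι w) := by
  rw [map_ker_dotProductEquiv,
    ker_dotProductEquiv_eq_iff ((smul_ne_zero_iff_ne _).2 hw) hw, ← Projectivization.smul_mk]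
  rfl

theorem exists_map_mulVecLin_eq_and_smul_ne {W : Submodule F (ι → F)} (hW : 2 ≤ finrank F W)
    (P : ℙ F (ι → F)) :
    ∃ g : Matrix.SpecialLinearGroup ι F, W.map (g : Matrix ι ι F).mulVecLin = W ∧ g • P ≠ P := by
  induction P using Projectivization.ind with | _ u hu =>
  obtain ⟨f, hfu, x, hxW, hx, hfx⟩ := exists_dual_apply_ne_zero_and_mem_ker hW hu
  obtain ⟨g, hg⟩ := exists_specialLinearGroup_smul_eq_add_smul hfx
  refine ⟨g, le_antisymm ?_ fun y hy ↦ ?_, ?_⟩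
  · rintro _ ⟨y, hy, rfl⟩
    rw [Matrix.mulVecLin_apply, ← specialLinearGroup_smul_eq_mulVec, hg]
    exact W.add_mem hy (W.smul_mem _ hxW)
  · have smul_sub : g • (y - f y • x) = y := by simp [hg, hfx]
    exact ⟨y - f y • x, W.sub_mem hy (W.smul_mem _ hxW), smul_sub⟩
  · rw [Projectivization.smul_mk, ne_eq, Projectivization.mk_eq_mk_iff', hg]
    rintro ⟨c, hc⟩
    obtain rfl : c = 1 := by
      have f_eq : c * f u = f u := by simpa [hfx] using congrArg f hc
      exact (mul_eq_right₀ hfu).1 f_eq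
    have smul_eq_zero : f u • x = 0 := by simpa using hc
    exact smul_ne_zero hfu hx smul_eq_zero

theorem SL3F2_vector_plane_stabilizers_almostConjugate_not_conjugate_general [Finite F]
    (hι : 3 ≤ Fintype.card ι)
    (L W : Submodule F (ι → F)) (hL : finrank F L = 1) (hW : finrank F W + 1 = Fintype.card ι)
    (H K : Subgroup (Matrix.SpecialLinearGroup ι F))
    (hH : ∀ g : Matrix.SpecialLinearGroup ι F, g ∈ H ↔ L.map (g : Matrix ι ι F).mulVecLin = L)
    (hK : ∀ g : Matrix.SpecialLinearGroup ι F, g ∈ K ↔ W.map (g : Matrix ι ι F).mulVecLin = W) :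
    AlmostConjugate H K ∧
      ¬ ∃ g : Matrix.SpecialLinearGroup ι F, H.map (MulAut.conj g).toMonoidHom = K := by
  obtain rfl : H = stabilizer _ (Projectivization.mk'' L hL) := by
    ext g
    rw [hH, mem_stabilizer_mk''_iff, toModuleEnd_specialLinearGroup]
  constructor
  · obtain ⟨w, hw, rfl⟩ := exists_ker_dotProductEquiv_eq hW
    obtain rfl : K =
        (stabilizer _ (Projectivization.mk F w hw)).comap contragredient.toMonoidHom := by
      ext g
      rw [hK, mem_comap_contragredient_stabilizer_mk_iff]
    exact .stabilizer_comap_stabilizer _ (fun g ↦ (card_fixedBy_contragredient g).symm) _ _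
  · rintro ⟨k, hk⟩
    obtain ⟨g, hgW, hg⟩ := exists_map_mulVecLin_eq_and_smul_ne (W := W) (by lia)
      (k • Projectivization.mk'' L hL)
    rw [← stabilizer_smul_eq_stabilizer_map_conj] at hk
    exact hg (mem_stabilizer_iff.1 (hk ▸ (hK g).2 hgW))

end LineAndHyperplaneStabilizers

/-- In SL(3,F₂), the stabilizer of a nonzero vector and the stabilizer of a
2-dimensional subspace are almost conjugate but not conjugate. -/
theorem SL3F2_vector_plane_stabilizers_almostConjugate_not_conjugate
    (v : Fin 3 → ZMod 2) (hv : v ≠ 0)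
    (W : Submodule (ZMod 2) (Fin 3 → ZMod 2)) (hW : Module.finrank (ZMod 2) W = 2)
    (H K : Subgroup (Matrix.SpecialLinearGroup (Fin 3) (ZMod 2)))
    (hH : ∀ g : Matrix.SpecialLinearGroup (Fin 3) (ZMod 2),
      g ∈ H ↔ Matrix.mulVec (g : Matrix (Fin 3) (Fin 3) (ZMod 2)) v = v)
    (hK : ∀ g : Matrix.SpecialLinearGroup (Fin 3) (ZMod 2),
      g ∈ K ↔ W.map (Matrix.mulVecLin (g : Matrix (Fin 3) (Fin 3) (ZMod 2))) = W) :
    AlmostConjugate H K ∧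
      ¬ ∃ g : Matrix.SpecialLinearGroup (Fin 3) (ZMod 2),
        Subgroup.map (MulAut.conj g).toMonoidHom H = K :=
  SL3F2_vector_plane_stabilizers_almostConjugate_not_conjugate_general (by simp)
    (ZMod 2 ∙ v) W (finrank_span_singleton hv) (by simp [hW]) H K
    (fun g ↦ (hH g).trans
      (map_span_singleton_eq_iff_of_subsingleton_units (Matrix.mulVecLin g) v).symm) hK
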